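/- arXiv:2103.15799 — 2 statements merged into one kernel-verified Lean document; each statement's English description precedes it below -/
import Mathlib

section
/- The class of finite ordered bipartite graphs (finite L*-structures where U and V partition the domain, (U, ≤_U) and (V, ≤_V) are linear orders, and R ⊆ U × V) is a Ramsey class: for all finite ordered bipartite graphs A and B and every k ≥ 1, there is a finite ordered bipartite graph C such that for every coloring of the embeddings of A into C with k colors, there is an embedding of B into C such that all embeddings of A into C factoring through it receive the same color. -/
open FirstOrder FirstOrder.Language

universe u v

/-- An elementary extension of `M`: a structure together with an elementary embedding of `M`
into it. -/
structure ElemExt (L : FirstOrder.Language.{u, v}) (M : Type (max u v)) [L.Structure M] where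
  carrier : Type (max u v)
  [str : L.Structure carrier]
  emb : M ↪ₑ[L] carrier

attribute [instance] ElemExt.str

/-- A formula `φ(x̄; ȳ)` (without parameters) has the order property with respect to a theory
`T` if in some model of `T` there are sequences `(āᵢ : i < ω)` and `(b̄ⱼ : j < ω)` such that
`φ(āᵢ; b̄ⱼ)` holds iff `i < j`. -/
def FormulaHasOP {L : FirstOrder.Language.{u, v}} (T : L.Theory) {α β : Type*}
    (φ : L.Formula (α ⊕ β)) : Prop :=
  ∃ (N : FirstOrder.Language.Theory.ModelType.{u, v, max u v} T)
    (a : ℕ → α → N) (b : ℕ → β → N),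
    ∀ i j : ℕ, φ.Realize (Sum.elim (a i) (b j)) ↔ i < j

/-- A formula `φ(x̄; ȳ)` (without parameters) has the independence property with respect to a
theory `T` if in some model of `T` there are tuples `(āᵢ : i < ω)` and `(b̄_S : S ⊆ ω)` such
that `φ(āᵢ; b̄_S)` holds iff `i ∈ S`. -/
def FormulaHasIP {L : FirstOrder.Language.{u, v}} (T : L.Theory) {α β : Type*}
    (φ : L.Formula (α ⊕ β)) : Prop :=
  ∃ (N : FirstOrder.Language.Theory.ModelType.{u, v, max u v} T)
    (a : ℕ → α → N) (b : Set ℕ → β → N),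
    ∀ (i : ℕ) (S : Set ℕ), φ.Realize (Sum.elim (a i) (b S)) ↔ i ∈ S

/-- A formula `φ(x̄; ȳ)` with parameters `c` from `M` has the order property if in some
elementary extension of `M` there are sequences `(āᵢ : i < ω)` and `(b̄ⱼ : j < ω)` such that
`φ(āᵢ; b̄ⱼ; c)` holds iff `i < j`. -/
def HasOPWithParams {L : FirstOrder.Language.{u, v}} {M : Type (max u v)} [L.Structure M]
    {α β γ : Type*} (φ : L.Formula ((α ⊕ β) ⊕ γ)) (c : γ → M) : Prop :=
  ∃ (N : ElemExt L M) (a : ℕ → α → N.carrier) (b : ℕ → β → N.carrier),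
    ∀ i j : ℕ, φ.Realize (Sum.elim (Sum.elim (a i) (b j)) (N.emb ∘ c)) ↔ i < j

/-- A formula `φ(x̄; ȳ)` with parameters `c` from `M` has the independence property if in some
elementary extension of `M` there are tuples `(āᵢ : i < ω)` and `(b̄_S : S ⊆ ω)` such that
`φ(āᵢ; b̄_S; c)` holds iff `i ∈ S`. -/
def HasIPWithParams {L : FirstOrder.Language.{u, v}} {M : Type (max u v)} [L.Structure M]
    {α β γ : Type*} (φ : L.Formula ((α ⊕ β) ⊕ γ)) (c : γ → M) : Prop :=
  ∃ (N : ElemExt L M) (a : ℕ → α → N.carrier) (b : Set ℕ → β → N.carrier),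
    ∀ (i : ℕ) (S : Set ℕ), φ.Realize (Sum.elim (Sum.elim (a i) (b S)) (N.emb ∘ c)) ↔ i ∈ S

/-- The family of tuples `(c̄ᵢ : i ∈ ι)` is an indiscernible sequence over the set `A`:
any two strictly increasing tuples of indices realize the same formulas with parameters
from `A`. -/
def IsIndiscernibleOver {L : FirstOrder.Language.{u, v}} {M : Type (max u v)} [L.Structure M]
    {ι : Type*} [LinearOrder ι] {γ : Type*} (c : ι → γ → M) (A : Set M) : Prop :=
  ∀ (n m : ℕ) (i j : Fin n → ι), StrictMono i → StrictMono j →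
    ∀ p : Fin m → M, (∀ l, p l ∈ A) →
      ∀ φ : L.Formula (Fin n × γ ⊕ Fin m),
        φ.Realize (Sum.elim (fun v : Fin n × γ => c (i v.1) v.2) p) ↔
          φ.Realize (Sum.elim (fun v : Fin n × γ => c (j v.1) v.2) p)

/-- The family of tuples `(c̄ᵢ : i ∈ ι)` is an indiscernible sequence. -/
def IsIndiscernible {L : FirstOrder.Language.{u, v}} {M : Type (max u v)} [L.Structure M]
    {ι : Type*} [LinearOrder ι] {γ : Type*} (c : ι → γ → M) : Prop :=
  IsIndiscernibleOver (L := L) c ∅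

/-- Two families of tuples are mutually indiscernible if each is indiscernible over the union
of the tuples of the other. -/
def MutuallyIndiscernible {L : FirstOrder.Language.{u, v}} {M : Type (max u v)} [L.Structure M]
    {ι : Type*} [LinearOrder ι] {γ δ : Type*} (a : ι → γ → M) (b : ι → δ → M) : Prop :=
  IsIndiscernibleOver (L := L) a (⋃ i, Set.range (b i)) ∧
    IsIndiscernibleOver (L := L) b (⋃ i, Set.range (a i))

/-- The family of tuples `(c̄ᵢ : i ∈ ι)` is totally indiscernible: any two tuples of distinct
indices (in any order) realize the same formulas. -/
def IsTotallyIndiscernible {L : FirstOrder.Language.{u, v}} {M : Type (max u v)} [L.Structure M]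
    {ι : Type*} [LinearOrder ι] {γ : Type*} (c : ι → γ → M) : Prop :=
  ∀ (n : ℕ) (i j : Fin n → ι), Function.Injective i → Function.Injective j →
    ∀ φ : L.Formula (Fin n × γ),
      φ.Realize (fun v : Fin n × γ => c (i v.1) v.2) ↔
        φ.Realize (fun v : Fin n × γ => c (j v.1) v.2)

/-- A set in a linear order is dense (in the order) and unbounded above and below. -/
def DenseUnbounded {α : Type*} [LinearOrder α] (S : Set α) : Prop :=
  (∀ x y : α, x < y → ∃ z ∈ S, x < z ∧ z < y) ∧ (∀ x : α, ∃ z ∈ S, z < x) ∧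
    (∀ x : α, ∃ z ∈ S, x < z)

/-- `R : α → β → Prop` presents (a structure isomorphic to) the random ordered bipartite
graph `G*`, i.e. the Fraïssé limit of finite ordered bipartite graphs: both parts are
countable nonempty dense linear orders without endpoints and the edge relation is generic. -/
def IsRandomOBG {α β : Type*} [LinearOrder α] [LinearOrder β] (R : α → β → Prop) : Prop :=
  Countable α ∧ Countable β ∧ Nonempty α ∧ Nonempty β ∧
    (∀ F G : Finset β, Disjoint F G →
      DenseUnbounded {x : α | (∀ f ∈ F, R x f) ∧ ∀ g ∈ G, ¬R x g}) ∧
    (∀ F G : Finset α, Disjoint F G →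
      DenseUnbounded {y : β | (∀ f ∈ F, R f y) ∧ ∀ g ∈ G, ¬R g y})

/-- An element of the random ordered bipartite graph `G*`, whose two parts `U(G*)` and
`V(G*)` are both identified with `ℚ`: `Sum.inl` is the `U`-part, `Sum.inr` the `V`-part. -/
abbrev GStarIdx : Type := ℚ ⊕ ℚ

/-- The index of the pair `(s, q)`: in the `U`-part if `s = true`, in the `V`-part
otherwise. -/
def mkIdx {n : ℕ} (s : Fin n → Bool) (q : Fin n → ℚ) : Fin n → GStarIdx := fun k =>
  bif s k then Sum.inl (q k) else Sum.inr (q k)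

/-- Two pairs of elements of `G*` (with edge relation `R`) have the same quantifier-free
`L*`-type, where `L* = {U, ≤_U, V, ≤_V, R}`. -/
def SamePairType (R : ℚ → ℚ → Prop) :
    GStarIdx → GStarIdx → GStarIdx → GStarIdx → Prop
  | Sum.inl p, Sum.inl q, Sum.inl p', Sum.inl q' => (p ≤ q ↔ p' ≤ q') ∧ (q ≤ p ↔ q' ≤ p')
  | Sum.inr p, Sum.inr q, Sum.inr p', Sum.inr q' => (p ≤ q ↔ p' ≤ q') ∧ (q ≤ p ↔ q' ≤ p')
  | Sum.inl p, Sum.inr q, Sum.inl p', Sum.inr q' => R p q ↔ R p' q'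
  | Sum.inr q, Sum.inl p, Sum.inr q', Sum.inl p' => R p q ↔ R p' q'
  | _, _, _, _ => False

/-- Two tuples of elements of `G*` (with edge relation `R`) have the same quantifier-free
`L*`-type. -/
def SameQfType (R : ℚ → ℚ → Prop) {n : ℕ} (i j : Fin n → GStarIdx) : Prop :=
  ∀ k l : Fin n, SamePairType R (i k) (i l) (j k) (j l)

/-- The variables carried by a coordinate of a mixed tuple: a `U`-index carries an `x̄`-tuple
of length `da`, a `V`-index a `ȳ`-tuple of length `db`. -/
def MixVar (da db : ℕ) : Bool → Type
  | true => Fin da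
  | false => Fin db

/-- Choose the `a`-tuple or the `b`-tuple according to the side. -/
def pickSide {M : Type*} {da db : ℕ} (a : Fin da → M) (b : Fin db → M) :
    (s : Bool) → MixVar da db s → M
  | true, w => a w
  | false, w => b w

/-- The family `(āᵢ : i ∈ U(G*) ≅ ℚ) ∪ (b̄ⱼ : j ∈ V(G*) ≅ ℚ)`, indexed by the random ordered
bipartite graph `G*` with edge relation `R`, is `L*`-indiscernible: index tuples with the same
quantifier-free `L*`-type in `G*` realize the same `L`-formulas in `M`. -/
def IsLStarIndiscernible {L : FirstOrder.Language.{u, v}} {M : Type (max u v)} [L.Structure M]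
    (R : ℚ → ℚ → Prop) {da db : ℕ} (a : ℚ → Fin da → M) (b : ℚ → Fin db → M) : Prop :=
  ∀ (n : ℕ) (s : Fin n → Bool) (q q' : Fin n → ℚ),
    SameQfType R (mkIdx s q) (mkIdx s q') →
      ∀ φ : L.Formula ((k : Fin n) × MixVar da db (s k)),
        φ.Realize (fun v => pickSide (a (q v.1)) (b (q v.1)) (s v.1) v.2) ↔
          φ.Realize (fun v => pickSide (a (q' v.1)) (b (q' v.1)) (s v.1) v.2)

/-- An ordered bipartite graph: an `L*`-structure where `U` and `V` partition the domain,
`(U, ≤_U)` and `(V, ≤_V)` are linear orders, and `R ⊆ U × V`. -/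
structure OBG where
  U : Type
  V : Type
  [lu : LinearOrder U]
  [lv : LinearOrder V]
  R : U → V → Prop

attribute [instance] OBG.lu OBG.lv

/-- An ordered bipartite graph is finite if both parts are finite. -/
def OBG.Fin (A : OBG) : Prop := Finite A.U ∧ Finite A.V

/-- An embedding of ordered bipartite graphs: order-embeddings of the two parts which
preserve and reflect the edge relation. -/
@[ext]
structure OBGEmb (A B : OBG) where
  fu : A.U ↪o B.U
  fv : A.V ↪o B.V
  hR : ∀ u v, B.R (fu u) (fv v) ↔ A.R u v

/-- Composition of embeddings of ordered bipartite graphs. -/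
def OBGEmb.comp {A B C : OBG} (g : OBGEmb B C) (f : OBGEmb A B) : OBGEmb A C where
  fu := (f.fu).trans g.fu
  fv := (f.fv).trans g.fv
  hR := fun u v => by
    simpa using (g.hR (f.fu u) (f.fv v)).trans (f.hR u v)

/-!
This is the partite construction of Nešetřil and Rödl. Ramsey's theorem, applied to each side, gives
finite orders `N` and `M` such that every colouring of the pairs `(j, k)` of embeddings of `A.U` in
`N` and of `A.V` in `M` is constant on the pairs that factor through some pair of embeddings of
`B.U` and `B.V`. Now replace the points of `N` and `M` by finite fibres carrying a bipartite
relation, and consider the copies of `A` that lie over a fixed pair `(j, k)`, with one vertex in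
each fibre over the ranges of `j` and `k`. The Hales–Jewett theorem, with these copies as alphabet,
gives an enlargement of the fibres, depending on the number of colours only, in which every
colouring is constant on the copies over `(j, k)` inside some image of the old fibres. Doing this
for all of the finitely many `(j, k)` in turn reduces an arbitrary colouring of copies of `A` to a
colouring of the pairs `(j, k)`.
-/

open Finset Function Combinatorics

namespace OBGRamsey

/-! ### Ramsey's theorem -/

section Ramsey

variable {α κ : Type*}

/-- `Y` is homogeneous for the colouring `χ` of `a`-element sets if all `a`-element subsets of `Y`
have the same colour. The values of `χ` on sets of other sizes are ignored. -/
def IsHomogeneous (χ : Finset α → κ) (a : ℕ) (Y : Finset α) : Prop :=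
  ∃ c, ∀ S ⊆ Y, #S = a → χ S = c

/-- `Y` is min-homogeneous for the colouring `χ` of `(a + 1)`-element sets if the colour of an
`(a + 1)`-element subset of `Y` depends on its least element only. -/
def IsMinHomogeneous [LinearOrder α] (χ : Finset α → κ) (a : ℕ) (Y : Finset α) : Prop :=
  ∃ g : α → κ, ∀ y ∈ Y, ∀ S ⊆ Y, #S = a → (∀ s ∈ S, y < s) → χ (insert y S) = g y

theorem IsMinHomogeneous.insert_min [LinearOrder α] {χ : Finset α → κ} {a : ℕ} {x : α}
    {Y : Finset α} (hY : IsMinHomogeneous χ a Y) (hx : IsHomogeneous (fun S => χ (insert x S)) a Y)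
    (hxY : ∀ y ∈ Y, x < y) : IsMinHomogeneous χ a (insert x Y) := by
  obtain ⟨g, hg⟩ := hY
  obtain ⟨c, hc⟩ := hx
  refine ⟨update g x c, fun y hy S hS hSa hyS => ?_⟩
  have hxy : x ≤ y := by
    rcases mem_insert.1 hy with rfl | hy
    exacts [le_rfl, (hxY y hy).le]
  have hSY : S ⊆ Y := (subset_insert_iff_of_notMem fun hxS => (hyS x hxS).not_ge hxy).1 hS
  rcases mem_insert.1 hy with rfl | hy
  · rw [update_self]
    exact hc S hSY hSa
  · rw [update_of_ne (hxY y hy).ne']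
    exact hg y hy S hSY hSa hyS

theorem IsMinHomogeneous.exists_isHomogeneous [LinearOrder α] [Finite κ] {χ : Finset α → κ}
    {a m : ℕ} {Y : Finset α} (hY : IsMinHomogeneous χ a Y) (hm : Nat.card κ * m ≤ #Y) :
    ∃ Z ⊆ Y, #Z = m ∧ IsHomogeneous χ (a + 1) Z := by
  classical
  have := Fintype.ofFinite κ
  have : Nonempty κ := ⟨χ ∅⟩
  obtain ⟨g, hg⟩ := hY
  obtain ⟨c, -, hc⟩ := exists_le_card_fiber_of_mul_le_card_of_maps_to
    (fun y _ => mem_univ (g y)) univ_nonempty (by rwa [card_univ, ← Nat.card_eq_fintype_card])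
  obtain ⟨Z, hZ, hZm⟩ := exists_subset_card_eq hc
  have hZY : Z ⊆ Y := hZ.trans (filter_subset _ _)
  refine ⟨Z, hZY, hZm, c, fun S hS hSa => ?_⟩
  have hne : S.Nonempty := card_pos.1 (by omega)
  have hmin : S.min' hne ∈ S := S.min'_mem hne
  calc χ S = χ (insert (S.min' hne) (S.erase (S.min' hne))) := by rw [insert_erase hmin]
    _ = g (S.min' hne) := hg _ (hZY (hS hmin)) _ ((erase_subset _ _).trans (hS.trans hZY))
          (by rw [card_erase_of_mem hmin, hSa, Nat.add_sub_cancel])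
          fun s hs => S.min'_lt_of_mem_erase_min' hne hs
    _ = c := (mem_filter.1 (hZ (hS hmin))).2

end Ramsey

theorem exists_forall_exists_isMinHomogeneous {κ : Type v} {a : ℕ}
    (ramsey : ∀ m, ∃ N, ∀ (α : Type u) (X : Finset α), N ≤ #X → ∀ χ : Finset α → κ,
      ∃ Y ⊆ X, #Y = m ∧ IsHomogeneous χ a Y) (m : ℕ) :
    ∃ N, ∀ (α : Type u) [LinearOrder α] (X : Finset α), N ≤ #X → ∀ χ : Finset α → κ,
      ∃ Y ⊆ X, #Y = m ∧ IsMinHomogeneous χ a Y := by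
  induction m with
  | zero => exact ⟨0, fun α _ X _ χ => ⟨∅, empty_subset X, card_empty, fun _ => χ ∅, by simp⟩⟩
  | succ m ih =>
    obtain ⟨N, hN⟩ := ih
    obtain ⟨N', hN'⟩ := ramsey N
    refine ⟨N' + 1, fun α _ X hX χ => ?_⟩
    have hne : X.Nonempty := card_pos.1 (by omega)
    set x := X.min' hne
    have hx : x ∈ X := X.min'_mem hne
    obtain ⟨Y', hY'X, hY'card, hY'⟩ := hN' α (X.erase x)
      (by rw [card_erase_of_mem hx]; omega) fun S => χ (insert x S)
    obtain ⟨Y, hYY', hYcard, hY⟩ := hN α Y' hY'card.ge χ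
    have hxY : ∀ y ∈ Y, x < y := fun y hy => X.min'_lt_of_mem_erase_min' hne (hY'X (hYY' hy))
    have hxYhom : IsHomogeneous (fun S => χ (insert x S)) a Y :=
      hY'.imp fun c hc S hS => hc S (hS.trans hYY')
    refine ⟨insert x Y, ?_, ?_, hY.insert_min hxYhom hxY⟩
    · exact insert_subset hx ((hYY'.trans hY'X).trans (erase_subset x X))
    · rw [card_insert_of_notMem fun h => (hxY x h).false, hYcard]

theorem exists_forall_exists_isHomogeneous (κ : Type v) [Finite κ] (a m : ℕ) :
    ∃ N, ∀ (α : Type u) (X : Finset α), N ≤ #X → ∀ χ : Finset α → κ,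
      ∃ Y ⊆ X, #Y = m ∧ IsHomogeneous χ a Y := by
  induction a generalizing m with
  | zero =>
    refine ⟨m, fun α X hX χ => ?_⟩
    obtain ⟨Y, hYX, hY⟩ := exists_subset_card_eq hX
    exact ⟨Y, hYX, hY, χ ∅, fun S _ hS => by rw [card_eq_zero.1 hS]⟩
  | succ a ih =>
    obtain ⟨N, hN⟩ := exists_forall_exists_isMinHomogeneous ih (Nat.card κ * m)
    refine ⟨N, fun α X hX χ => ?_⟩
    let : LinearOrder α := IsWellOrder.linearOrder WellOrderingRel
    obtain ⟨Y, hYX, hYcard, hY⟩ := hN α X hX χ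
    obtain ⟨Z, hZY, hZ⟩ := hY.exists_isHomogeneous hYcard.ge
    exact ⟨Z, hZY.trans hYX, hZ⟩

section OrderEmbedding

theorem injective_map_orderEmbedding_univ {α β : Type*} [LinearOrder α] [Fintype α]
    [PartialOrder β] :
    Injective fun f : α ↪o β => univ.map f.toEmbedding := fun f g hfg => by
  rw [← OrderEmbedding.range_inj]
  simpa using congrArg (fun s : Finset β => (s : Set β)) hfg

variable (A B A' B' : Type*) [LinearOrder A] [LinearOrder B] [LinearOrder A'] [LinearOrder B']
  [Finite A] [Finite B] [Finite A'] [Finite B'] (κ : Type*) [Finite κ] [Nonempty κ]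

theorem exists_orderEmbedding_monochromatic :
    ∃ N : ℕ, ∀ χ : (A ↪o Fin N) → κ, ∃ e : B ↪o Fin N, ∃ c, ∀ f : A ↪o B,
      χ (f.trans e) = c := by
  have := Fintype.ofFinite A
  have := Fintype.ofFinite B
  obtain ⟨N, hN⟩ := exists_forall_exists_isHomogeneous κ (Fintype.card A) (Fintype.card B)
  refine ⟨N, fun χ => ?_⟩
  obtain ⟨Y, -, hYcard, c, hc⟩ := hN (Fin N) univ (by simp)
    (extend (fun f : A ↪o Fin N => univ.map f.toEmbedding) χ fun _ => Classical.arbitrary κ)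
  let e : B ↪o Fin N :=
    (Fintype.orderIsoFinOfCardEq B rfl).symm.toOrderEmbedding.trans (Y.orderEmbOfFin hYcard)
  refine ⟨e, c, fun f => ?_⟩
  have hfe : univ.map (f.trans e).toEmbedding ⊆ Y := by
    intro y hy
    obtain ⟨a, -, rfl⟩ := mem_map.1 hy
    exact Y.orderEmbOfFin_mem hYcard _
  rw [← injective_map_orderEmbedding_univ.extend_apply χ (fun _ => Classical.arbitrary κ)]
  exact hc _ hfe (by rw [card_map, card_univ])

theorem exists_orderEmbedding_prod_monochromatic :
    ∃ N M : ℕ, ∀ χ : (A ↪o Fin N) × (A' ↪o Fin M) → κ,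
      ∃ (e : B ↪o Fin N) (e' : B' ↪o Fin M), ∃ c, ∀ (f : A ↪o B) (f' : A' ↪o B'),
        χ (f.trans e, f'.trans e') = c := by
  obtain ⟨N, hN⟩ := exists_orderEmbedding_monochromatic A B κ
  have : Finite (A ↪o Fin N) := DFunLike.finite _
  obtain ⟨M, hM⟩ := exists_orderEmbedding_monochromatic A' B' ((A ↪o Fin N) → κ)
  refine ⟨N, M, fun χ => ?_⟩
  obtain ⟨e', g, hg⟩ := hM fun f' f => χ (f, f')
  obtain ⟨e, c, hc⟩ := hN g
  exact ⟨e, e', c, fun f f' => (congrFun (hg f') (f.trans e)).trans (hc f)⟩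

end OrderEmbedding

/-! ### Partite systems -/

/-- A bipartite graph whose two sides are split into finite fibres, indexed by `N` and `M`. -/
structure PartiteSystem (N M : Type*) where
  X : N → Type u
  Y : M → Type u
  Rel : ∀ {n m}, X n → Y m → Prop
  [finite_X : ∀ n, Finite (X n)]
  [finite_Y : ∀ m, Finite (Y m)]

namespace PartiteSystem

attribute [instance] finite_X finite_Y

variable {N M α β : Type*} {P Q Q' : PartiteSystem.{u} N M} {r : α → β → Prop}
  {j : α → N} {k : β → M}

/-- A fibre-preserving map of partite systems that preserves and reflects the relation. It need not
be injective: it is applied to transversals only, whose points lie in different fibres. -/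
structure Hom (P Q : PartiteSystem.{u} N M) where
  fst : ∀ {n}, P.X n → Q.X n
  snd : ∀ {m}, P.Y m → Q.Y m
  rel_iff : ∀ {n m} (x : P.X n) (y : P.Y m), Q.Rel (fst x) (snd y) ↔ P.Rel x y

/-- The identity map of a partite system. -/
def Hom.id (P : PartiteSystem.{u} N M) : Hom P P := ⟨fun x => x, fun y => y, fun _ _ => Iff.rfl⟩

/-- The composite of two maps of partite systems. -/
def Hom.comp (g : Hom Q Q') (f : Hom P Q) : Hom P Q' where
  fst x := g.fst (f.fst x)
  snd y := g.snd (f.snd y)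
  rel_iff _ _ := (g.rel_iff _ _).trans (f.rel_iff _ _)

/-- A copy of the bipartite graph `r` in `P` lying over `j` and `k`: the vertices `a` and `b` are
sent into the fibres over `j a` and `k b`. -/
@[ext]
structure Transversal (P : PartiteSystem.{u} N M) (r : α → β → Prop) (j : α → N) (k : β → M) where
  fst : ∀ a, P.X (j a)
  snd : ∀ b, P.Y (k b)
  rel_iff : ∀ a b, P.Rel (fst a) (snd b) ↔ r a b

namespace Transversal

/-- The image of a transversal under a map of partite systems. -/
def map (e : Hom P Q) (T : P.Transversal r j k) : Q.Transversal r j k where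
  fst a := e.fst (T.fst a)
  snd b := e.snd (T.snd b)
  rel_iff a b := (e.rel_iff _ _).trans (T.rel_iff a b)

instance [Finite α] [Finite β] : Finite (P.Transversal r j k) :=
  .of_injective (fun T => (T.fst, T.snd)) fun _ _ h =>
    Transversal.ext (congrArg Prod.fst h) (congrArg Prod.snd h)

end Transversal

open Classical in
/-- The `ι`-th power of `P` relative to a bipartite graph `E` on the index sets. A vertex tagged
`some i` is compared with all others in coordinate `i`. Two untagged vertices are compared in all
coordinates at once, with `∀` over the edges of `E` and `∃` elsewhere, so that they agree with `E`
if all their coordinates do. -/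
def power (P : PartiteSystem.{u} N M) (E : N → M → Prop) (ι : Type) [Finite ι] :
    PartiteSystem.{u} N M where
  X n := (ι → P.X n) × Option ι
  Y m := (ι → P.Y m) × Option ι
  Rel {n m} x y := (x.2 <|> y.2).elim
    (if E n m then ∀ i, P.Rel (x.1 i) (y.1 i) else ∃ i, P.Rel (x.1 i) (y.1 i))
    fun i => P.Rel (x.1 i) (y.1 i)

open Classical in
/-- The value in the fibre over `n` of a partial section `s` over the range of `j`, with the
default `x` outside the range. -/
noncomputable def sectionAt {X : N → Type*} (s : ∀ a, X (j a)) {n : N} (x : X n) : X n :=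
  if h : ∃ a, j a = n then h.choose_spec ▸ s h.choose else x

theorem sectionAt_apply {X : N → Type*} (hj : Injective j) (s : ∀ a, X (j a)) (a : α)
    (x : X (j a)) : sectionAt s x = s a := by
  have transport : ∀ a' (h : j a' = j a), h ▸ s a' = s a := by
    intro a' h
    cases hj h
    rfl
  rw [sectionAt, dif_pos ⟨a, rfl⟩]
  exact transport _ _

open Classical in
/-- The image of `x` in `power` along the combinatorial line `l` of partial sections over the range
of `j`, where `i` is an active coordinate of `l`. A vertex over the range follows the line; all
others are tagged by `i`. -/
noncomputable def lineLift {X : N → Type*} {ι σ : Type*} (sec : σ → ∀ a, X (j a)) (l : Line σ ι)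
    (i : ι) {n : N} (x : X n) : (ι → X n) × Option ι :=
  (fun t => (l.idxFun t).elim x fun T => sectionAt (sec T) x,
    if n ∈ Set.range j then none else some i)

section LineLift

variable {X : N → Type*} {ι σ : Type*} {sec : σ → ∀ a, X (j a)} {l : Line σ ι} {i : ι}

theorem lineLift_fst_active (hi : l.idxFun i = none) {n : N} (x : X n) :
    (lineLift sec l i x).1 i = x := by
  simp [lineLift, hi]

theorem lineLift_snd_of_notMem {n : N} (hn : n ∉ Set.range j) (x : X n) :
    (lineLift sec l i x).2 = some i :=
  if_neg hn

theorem lineLift_apply (hj : Injective j) (a : α) (x : X (j a)) :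
    lineLift sec l i x = (fun t => (l.idxFun t).elim x fun T => sec T a, none) := by
  simp [lineLift, sectionAt_apply hj]

end LineLift

theorem ite_forall_exists_iff {ι : Type*} {p : ι → Prop} {q e : Prop} [Decidable e] {i : ι}
    (hi : p i ↔ q) (hp : ∀ t, (p t ↔ q) ∨ (p t ↔ e)) :
    (if e then ∀ t, p t else ∃ t, p t) ↔ q := by
  split_ifs <;> grind

section HalesJewett

variable {ι : Type} [Finite ι]

/-- A family of transversals, viewed as a single transversal of the power. -/
def Transversal.pi (hj : Injective j) (hk : Injective k) (T : ι → P.Transversal r j k) :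
    (P.power (Relation.Map r j k) ι).Transversal r j k where
  fst a := (fun i => (T i).fst a, none)
  snd b := (fun i => (T i).snd b, none)
  rel_iff a b := by
    by_cases hab : r a b <;>
      simp [power, Relation.map_apply_apply hj hk, Transversal.rel_iff, hab]

theorem power_rel_lineLift_iff (hj : Injective j) (hk : Injective k)
    (l : Line (P.Transversal r j k) ι) {i : ι} (hi : l.idxFun i = none) {n : N} {m : M}
    (x : P.X n) (y : P.Y m) :
    (P.power (Relation.Map r j k) ι).Rel (lineLift Transversal.fst l i x)
      (lineLift Transversal.snd l i y) ↔ P.Rel x y := by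
  classical
  by_cases hn : n ∈ Set.range j
  · obtain ⟨a, rfl⟩ := hn
    by_cases hm : m ∈ Set.range k
    · obtain ⟨b, rfl⟩ := hm
      rw [lineLift_apply hj, lineLift_apply hk]
      -- The line equals `(x, y)` in an active coordinate and a transversal in every other one.
      have coordinate (t : ι) :
          (P.Rel ((l.idxFun t).elim x fun T => T.fst a) ((l.idxFun t).elim y fun T => T.snd b) ↔
            P.Rel x y) ∨
          (P.Rel ((l.idxFun t).elim x fun T => T.fst a) ((l.idxFun t).elim y fun T => T.snd b) ↔
            Relation.Map r j k (j a) (k b)) := by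
        rw [Relation.map_apply_apply hj hk]
        rcases l.idxFun t with _ | T
        exacts [.inl Iff.rfl, .inr (T.rel_iff a b)]
      exact ite_forall_exists_iff (i := i) (by simp [hi]) coordinate
    · simp [power, lineLift_apply hj, lineLift_snd_of_notMem hm, lineLift_fst_active hi, hi]
  · simp [power, lineLift_snd_of_notMem hn, lineLift_fst_active hi]

/-- The map of `P` into its power along a line of transversals with active coordinate `i`. -/
noncomputable def lineHom (hj : Injective j) (hk : Injective k) (l : Line (P.Transversal r j k) ι)
    {i : ι} (hi : l.idxFun i = none) : Hom P (P.power (Relation.Map r j k) ι) where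
  fst := lineLift Transversal.fst l i
  snd := lineLift Transversal.snd l i
  rel_iff := power_rel_lineLift_iff hj hk l hi

theorem map_lineHom (hj : Injective j) (hk : Injective k) (l : Line (P.Transversal r j k) ι)
    {i : ι} (hi : l.idxFun i = none) (T : P.Transversal r j k) :
    T.map (lineHom hj hk l hi) = Transversal.pi hj hk (l T) := by
  ext a : 2
  · refine (lineLift_apply hj a _).trans (Prod.ext (funext fun t => ?_) rfl)
    rw [Transversal.pi]
    cases h : l.idxFun t <;> simp [h]
  · refine (lineLift_apply hk a _).trans (Prod.ext (funext fun t => ?_) rfl)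
    rw [Transversal.pi]
    cases h : l.idxFun t <;> simp [h]

theorem exists_forall_map_eq [Finite α] [Finite β] (P : PartiteSystem.{u} N M) (r : α → β → Prop)
    (hj : Injective j) (hk : Injective k) (κ : Type*) [Finite κ] :
    ∃ Q : PartiteSystem.{u} N M, ∀ χ : Q.Transversal r j k → κ, ∃ e : Hom P Q, ∃ c,
      ∀ T : P.Transversal r j k, χ (T.map e) = c := by
  obtain ⟨ι, _, hι⟩ := Line.exists_mono_in_high_dimension (P.Transversal r j k) κ
  refine ⟨P.power (Relation.Map r j k) ι, fun χ => ?_⟩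
  obtain ⟨l, c, hc⟩ := hι fun T => χ (Transversal.pi hj hk T)
  obtain ⟨i, hi⟩ := l.proper
  exact ⟨lineHom hj hk l hi, c, fun T => (congrArg χ (map_lineHom hj hk l hi T)).trans (hc T)⟩

end HalesJewett

theorem exists_forall_mem_exists_forall_map_eq [Finite α] [Finite β] {σ : Type*} {j : σ → α → N}
    {k : σ → β → M} (P : PartiteSystem.{u} N M) (r : α → β → Prop) (hj : ∀ s, Injective (j s))
    (hk : ∀ s, Injective (k s)) (κ : Type*) [Finite κ] (F : Finset σ) :
    ∃ Q : PartiteSystem.{u} N M, ∀ χ : ∀ s, Q.Transversal r (j s) (k s) → κ, ∃ e : Hom P Q,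
      ∀ s ∈ F, ∃ c, ∀ T : P.Transversal r (j s) (k s), χ s (T.map e) = c := by
  classical
  induction F using Finset.induction_on generalizing P with
  | empty => exact ⟨P, fun χ => ⟨Hom.id P, by simp⟩⟩
  | insert s F _ ih =>
    obtain ⟨Q, hQ⟩ := exists_forall_map_eq P r (hj s) (hk s) κ
    obtain ⟨Q', hQ'⟩ := ih Q
    refine ⟨Q', fun χ => ?_⟩
    obtain ⟨e', he'⟩ := hQ' χ
    obtain ⟨e, he⟩ := hQ fun T => χ s (T.map e')
    refine ⟨e'.comp e, forall_mem_insert .. |>.2 ⟨he, fun t ht => ?_⟩⟩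
    exact (he' t ht).imp fun c hc T => hc (T.map e)

end PartiteSystem

/-! ### Ordered bipartite graphs -/

section OBG

open PartiteSystem

variable {N M : Type} [LinearOrder N] [LinearOrder M]

/-- An arbitrary order on a fibre. Its choice is irrelevant, since copies of a graph meet each fibre
at most once. -/
noncomputable instance (P : PartiteSystem N M) (n : N) : LinearOrder (P.X n) :=
  IsWellOrder.linearOrder WellOrderingRel

noncomputable instance (P : PartiteSystem N M) (m : M) : LinearOrder (P.Y m) :=
  IsWellOrder.linearOrder WellOrderingRel

/-- The ordered bipartite graph on the vertices of a partite system, the fibres being ordered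
according to their indices. -/
noncomputable def PartiteSystem.toOBG (P : PartiteSystem.{0} N M) : OBG where
  U := Σₗ n, P.X n
  V := Σₗ m, P.Y m
  R x y := P.Rel x.2 y.2

theorem PartiteSystem.toOBG_fin [Finite N] [Finite M] (P : PartiteSystem.{0} N M) : P.toOBG.Fin :=
  ⟨inferInstanceAs (Finite (Σ n, P.X n)), inferInstanceAs (Finite (Σ m, P.Y m))⟩

/-- The embedding of ordered bipartite graphs given by a transversal over order embeddings. -/
noncomputable def PartiteSystem.Transversal.toOBGEmb {P : PartiteSystem N M} {A : OBG}
    {j : A.U ↪o N} {k : A.V ↪o M} (T : P.Transversal A.R j k) : OBGEmb A P.toOBG where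
  fu := .ofStrictMono (fun a => (⟨j a, T.fst a⟩ : Σₗ n, P.X n))
    fun _ _ h => Sigma.Lex.lt_def.2 (.inl (j.strictMono h))
  fv := .ofStrictMono (fun b => (⟨k b, T.snd b⟩ : Σₗ m, P.Y m))
    fun _ _ h => Sigma.Lex.lt_def.2 (.inl (k.strictMono h))
  hR := T.rel_iff

/-- The restriction of a copy of `B` along an embedding of `A` into `B`. -/
def PartiteSystem.Transversal.restrict {P : PartiteSystem.{u} N M} {A B : OBG} {j : B.U ↪o N}
    {k : B.V ↪o M} (T : P.Transversal B.R j k) (f : OBGEmb A B) :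
    P.Transversal A.R (f.fu.trans j) (f.fv.trans k) where
  fst a := T.fst (f.fu a)
  snd a := T.snd (f.fv a)
  rel_iff a a' := (T.rel_iff _ _).trans (f.hR a a')

theorem PartiteSystem.Transversal.toOBGEmb_comp {P : PartiteSystem N M} {A B : OBG} {j : B.U ↪o N}
    {k : B.V ↪o M} (T : P.Transversal B.R j k) (f : OBGEmb A B) :
    T.toOBGEmb.comp f = (T.restrict f).toOBGEmb :=
  rfl

theorem PartiteSystem.Transversal.restrict_map {P Q : PartiteSystem.{u} N M} {A B : OBG}
    {j : B.U ↪o N} {k : B.V ↪o M} (T : P.Transversal B.R j k) (e : Hom P Q) (f : OBGEmb A B) :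
    (T.map e).restrict f = (T.restrict f).map e :=
  rfl

/-- The partite system all of whose fibres are the two sides of the graph `B`. -/
def constSystem (B : OBG) [Finite B.U] [Finite B.V] (N M : Type) : PartiteSystem N M where
  X _ := B.U
  Y _ := B.V
  Rel := B.R

/-- The transversal of `constSystem B N M` over `j` and `k` that consists of the vertices of `B`. -/
def constTransversal (B : OBG) [Finite B.U] [Finite B.V] (j : B.U → N) (k : B.V → M) :
    (constSystem B N M).Transversal B.R j k where
  fst b := b
  snd b := b
  rel_iff _ _ := Iff.rfl

end OBG

end OBGRamsey

open OBGRamsey PartiteSystem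

/-- The class of finite ordered bipartite graphs is a Ramsey class: for all
finite ordered bipartite graphs `A`, `B` and every `k ≥ 1` there is a finite ordered
bipartite graph `C` such that for every `k`-coloring of the embeddings of `A` into `C` there
is an embedding `e` of `B` into `C` such that all embeddings of `A` into `C` factoring
through `e` get the same color. -/
theorem finite_ordered_bipartite_graphs_ramsey :
    ∀ A B : OBG, A.Fin → B.Fin → ∀ k : ℕ, 1 ≤ k →
      ∃ C : OBG, C.Fin ∧ ∀ χ : OBGEmb A C → Fin k,
        ∃ e : OBGEmb B C, ∀ f g : OBGEmb A B, χ (e.comp f) = χ (e.comp g) := by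
  rintro A B ⟨_, _⟩ ⟨_, _⟩ k hk
  have : Nonempty (Fin k) := ⟨⟨0, hk⟩⟩
  obtain ⟨N, M, hNM⟩ := exists_orderEmbedding_prod_monochromatic A.U B.U A.V B.V (Fin k)
  have : Finite (A.U ↪o Fin N) := DFunLike.finite _
  have : Finite (A.V ↪o Fin M) := DFunLike.finite _
  have := Fintype.ofFinite ((A.U ↪o Fin N) × (A.V ↪o Fin M))
  obtain ⟨Q, hQ⟩ := exists_forall_mem_exists_forall_map_eq (constSystem B (Fin N) (Fin M)) A.R
    (fun s : (A.U ↪o Fin N) × (A.V ↪o Fin M) => s.1.injective) (fun s => s.2.injective) (Fin k) univ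
  refine ⟨Q.toOBG, Q.toOBG_fin, fun χ => ?_⟩
  obtain ⟨e, he⟩ := hQ fun s T => χ T.toOBGEmb
  choose c hc using fun s => he s (Finset.mem_univ s)
  obtain ⟨j, j', d, hd⟩ := hNM c
  let T := constTransversal B j j'
  have hT (f : OBGEmb A B) : χ ((T.map e).toOBGEmb.comp f) = d := by
    rw [Transversal.toOBGEmb_comp, Transversal.restrict_map, hc (_, _), hd]
  exact ⟨(T.map e).toOBGEmb, fun f g => (hT f).trans (hT g).symm⟩
end

section
/- Let T be a complete first-order theory. If for every model M of T every formula φ(x;y) with parameters from M, where x and y are single variables, does not have the order property, then T is NIP; and consequently (by the argument via totally indiscernible sequences) T is stable. In other words, the stable case of the main theorem follows from the NIP case: if T is NIP and every formula in two single variables with parameters lacks the order property, then T is stable. -/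
open FirstOrder FirstOrder.Language

universe u v

/-!
The independence property gives the order property, so the point is that an unstable `φ(x̄; ȳ)` can
be replaced by one in two single variables. By symmetry it is enough to show that if
`φ(x̄, w̄; ȳ)` is unstable, then so is some formula, with parameters, either in `(x̄; ȳ)` or in
`(w̄; ȳ)`.

Let `φ(āᵢ, d̄ᵢ; b̄ⱼ)` hold iff `i < j`, and let `χₖ(x̄; ȳ₀, …, ȳₙ₋₁)` say that some `w̄` satisfies
`φ(x̄, w̄; ȳₘ)` exactly for `k < m`. Then `w̄ = d̄ᵢ` witnesses `χₖ` at `x̄ = āᵢ` and `ȳₘ = b̄_{vₘ}`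
as soon as `i` lies at the `k`-th cut of `v`. If every formula in `(x̄; ȳ)` is stable, iterated
limits along an ultrafilter commute for each `χₖ` in each block `ȳₘ` (Grothendieck's double limit
criterion), so `i` can be moved below all of `v`, for all `k` at once. For one fixed `i` and one
fixed `v`, the witnesses `w̄ₖ` of the `χₖ` then form, with the `b̄_{vₘ}`, a ladder of length `n` for
`φ(āᵢ, w̄; ȳ)`.
-/

open Filter

section Ladder

variable {I J X : Type*} {n : ℕ}

/-- The relation `A` contains a half graph of length `n`, i.e. a finite piece of a witness of the
order property. -/
def HasLadder (n : ℕ) (A : I → J → Prop) : Prop :=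
  ∃ (a : Fin n → I) (b : Fin n → J), ∀ s t, A (a s) (b t) ↔ s < t

namespace HasLadder

theorem of_comp {I' J' : Type*} {A : I → J → Prop} (f : I' → I) (g : J' → J)
    (h : HasLadder n fun i j => A (f i) (g j)) : HasLadder n A := by
  obtain ⟨a, b, hab⟩ := h
  exact ⟨f ∘ a, g ∘ b, hab⟩

theorem swap {A : I → J → Prop} (h : HasLadder n A) : HasLadder n fun j i => A i j := by
  obtain ⟨a, b, hab⟩ := h
  exact ⟨b ∘ Fin.rev, a ∘ Fin.rev, fun s t => (hab _ _).trans Fin.rev_lt_rev⟩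

theorem eventually {V : Ultrafilter X} {A : X → I → J → Prop}
    (h : HasLadder n fun i j => ∀ᶠ x in V, A x i j) : ∀ᶠ x in V, HasLadder n (A x) := by
  obtain ⟨a, b, hab⟩ := h
  suffices ∀ᶠ x in V, ∀ s t, A x (a s) (b t) ↔ s < t from this.mono fun x hx => ⟨a, b, hx⟩
  refine eventually_all.2 fun s => eventually_all.2 fun t => ?_
  by_cases hst : s < t
  · exact ((hab s t).2 hst).mono fun x hx => iff_of_true hx hst
  · exact (Ultrafilter.eventually_not.2 (mt (hab s t).1 hst)).mono fun x hx => iff_of_false hx hst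

theorem of_iterated_limits_ne {U : Ultrafilter I} {V : Ultrafilter J} {A : I → J → Prop}
    (hVU : ∀ᶠ j in V, ∀ᶠ i in U, A i j) (hUV : ∀ᶠ i in U, ∀ᶠ j in V, ¬ A i j) (n : ℕ) :
    HasLadder n A := by
  suffices ∃ (a : Fin n → I) (b : Fin n → J), (∀ s, ∀ᶠ j in V, ¬ A (a s) j) ∧
      (∀ t, ∀ᶠ i in U, A i (b t)) ∧ ∀ s t, A (a s) (b t) ↔ s < t by
    obtain ⟨a, b, -, -, hab⟩ := this
    exact ⟨a, b, hab⟩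
  induction n with
  | zero => exact ⟨Fin.elim0, Fin.elim0, fun s => s.elim0, fun t => t.elim0, fun s => s.elim0⟩
  | succ n ih =>
    obtain ⟨a, b, ha, hb, hab⟩ := ih
    obtain ⟨i, hib, hi⟩ := ((eventually_all.2 hb).and hUV).exists
    obtain ⟨j, haj, hj, hij⟩ := ((eventually_all.2 ha).and (hVU.and hi)).exists
    refine ⟨Fin.cons i a, Fin.cons j b, Fin.cases hi ha, Fin.cases hj hb, ?_⟩
    refine Fin.cases (Fin.cases ?_ fun t => ?_) fun s => Fin.cases ?_ fun t => ?_
    · simpa using hij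
    · simpa using hib t
    · simpa using haj s
    · simpa using hab s t

end HasLadder

theorem eventually_comm_of_not_hasLadder {U : Ultrafilter I} {V : Ultrafilter J}
    {A : I → J → Prop} (hA : ¬ HasLadder n A) (h : ∀ᶠ j in V, ∀ᶠ i in U, A i j) :
    ∀ᶠ i in U, ∀ᶠ j in V, A i j := by
  by_contra hUV
  simp only [← Ultrafilter.eventually_not] at hUV
  exact hA (.of_iterated_limits_ne h hUV n)

end Ladder

section FubiniPower

variable {ι : Type*}

/-- The `n`-fold Fubini power of an ultrafilter: `∀ᶠ v in fubiniPow U n, P v` means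
`∀ᶠ v₀ in U, …, ∀ᶠ vₙ₋₁ in U, P v`, with the quantifier on the first coordinate outermost. -/
noncomputable def fubiniPow (U : Ultrafilter ι) : (n : ℕ) → Ultrafilter (Fin n → ι)
  | 0 => pure Fin.elim0
  | n + 1 => U.bind fun j => (fubiniPow U n).map (Fin.cons j)

theorem eventually_fubiniPow_succ {U : Ultrafilter ι} {n : ℕ} {P : (Fin (n + 1) → ι) → Prop} :
    (∀ᶠ v in fubiniPow U (n + 1), P v) ↔ ∀ᶠ j in U, ∀ᶠ v in fubiniPow U n, P (Fin.cons j v) :=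
  Iff.rfl

theorem eventually_fubiniPow_forall {U : Ultrafilter ι} {P : ι → Prop} (h : ∀ᶠ j in U, P j) :
    ∀ n, ∀ᶠ v : Fin n → ι in fubiniPow U n, ∀ m, P (v m)
  | 0 => .of_forall fun _ m => m.elim0
  | n + 1 => eventually_fubiniPow_succ.2 <| h.mono fun _ hj =>
      (eventually_fubiniPow_forall h n).mono fun _ hv => Fin.cases hj hv

/-- If `R` has no long ladders in any coordinate of `v`, the position of `i` among the `v m` is
irrelevant: moving the quantifier on `i` past those on the first `p` coordinates, one at a time,
is an exchange of iterated limits. -/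
theorem eventually_fubiniPow_of_cut [LinearOrder ι] [NoMaxOrder ι] {U : Ultrafilter ι}
    (hU : (U : Filter ι) ≤ atTop) {n : ℕ} (p : ℕ) {R : ι → (Fin n → ι) → Prop}
    (hladder : ∀ m, ∃ N, ∀ v, ¬ HasLadder N fun i j => R i (Function.update v m j))
    (hR : ∀ᶠ i in U, ∀ v : Fin n → ι, (∀ m, i < v m ↔ p ≤ m) → R i v) :
    ∀ᶠ i in U, ∀ᶠ v in fubiniPow U n, R i v := by
  induction n generalizing p with
  | zero => exact hR.mono fun i hi => .of_forall fun v => hi v fun m => m.elim0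
  | succ n ih =>
    cases p with
    | zero =>
      refine hR.mono fun i hi => ?_
      have hlt : ∀ᶠ j in U, i < j := (eventually_gt_atTop i).filter_mono hU
      exact (eventually_fubiniPow_forall hlt _).mono fun v hv => hi v fun m => by simp [hv m]
    | succ p =>
      have hrest (j : ι) : ∀ᶠ i in U, ∀ᶠ v in fubiniPow U n, R i (Fin.cons j v) := by
        refine ih p (fun m => ?_) ?_
        · obtain ⟨N, hN⟩ := hladder m.succ
          exact ⟨N, fun v => by simpa only [Fin.cons_update] using hN (Fin.cons j v)⟩
        · filter_upwards [hR, (eventually_ge_atTop j).filter_mono hU] with i hi hji v hv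
          exact hi _ (Fin.cases (by simpa using hji) fun m => by simpa using hv m)
      obtain ⟨N, hN⟩ := hladder 0
      refine eventually_comm_of_not_hasLadder (n := N)
        (A := fun i j => ∀ᶠ v in fubiniPow U n, R i (Fin.cons j v))
        (fun hlad => ?_) (.of_forall hrest)
      obtain ⟨v, hv⟩ := hlad.eventually.exists
      obtain ⟨j⟩ := nonempty_of_neBot (U : Filter ι)
      exact hN (Fin.cons j v) (by simpa only [Fin.update_cons_zero] using hv)

end FubiniPower

section Formula

variable {L : FirstOrder.Language.{u, v}} {α β γ δ : Type*} {M : Type*} [L.Structure M]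

/-- The relation `φ(x̄; ȳ; c)` between tuples of `M` cut out by `φ` with parameters `c`. -/
def paramRel (φ : L.Formula ((α ⊕ β) ⊕ γ)) (c : γ → M) (a : α → M) (b : β → M) : Prop :=
  φ.Realize (Sum.elim (Sum.elim a b) c)

theorem paramRel_relabel_map {α' β' γ' : Type*} {φ : L.Formula ((α ⊕ β) ⊕ γ)} {f : α → α'}
    {g : β → β'} {h : γ → γ'} {c : γ' → M} {a : α' → M} {b : β' → M} :
    paramRel (φ.relabel (Sum.map (Sum.map f g) h)) c a b ↔
      paramRel φ (c ∘ h) (a ∘ f) (b ∘ g) := by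
  simp only [paramRel, Formula.realize_relabel, Sum.elim_comp_map]

theorem paramRel_relabel_swap {φ : L.Formula ((α ⊕ β) ⊕ γ)} {c : γ → M} :
    paramRel (φ.relabel (Sum.map Sum.swap id)) c = fun b a => paramRel φ c a b := by
  ext b a
  simp only [paramRel, Formula.realize_relabel, Sum.elim_comp_map, Sum.elim_swap,
    Function.comp_id]

/-- The change of variables turning the object variables `α` into parameters. -/
def leftToParam : ((α ⊕ δ) ⊕ β) ⊕ γ → (δ ⊕ β) ⊕ (α ⊕ γ)
  | .inl (.inl (.inl x)) => .inr (.inl x)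
  | .inl (.inl (.inr w)) => .inl (.inl w)
  | .inl (.inr y) => .inl (.inr y)
  | .inr z => .inr (.inr z)

theorem paramRel_relabel_leftToParam {φ : L.Formula (((α ⊕ δ) ⊕ β) ⊕ γ)} {c : γ → M}
    {a : α → M} :
    paramRel (φ.relabel leftToParam) (Sum.elim a c) = fun w b => paramRel φ c (Sum.elim a w) b := by
  ext w b
  rw [paramRel, paramRel, Formula.realize_relabel]
  refine iff_of_eq (congrArg _ ?_)
  ext (((_ | _) | _) | _) <;> rfl

/-- The tuple of elements of an ultraproduct represented by a family of tuples. -/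
def ultraproductTuple {ι κ : Type*} (U : Ultrafilter ι) {N : ι → Type*} (x : ∀ i, κ → N i) :
    κ → (U : Filter ι).Product N :=
  fun q => Quotient.mk _ fun i => x i q

theorem paramRel_ultraproductTuple {ι : Type*} {U : Ultrafilter ι} {N : ι → Type*}
    [∀ i, L.Structure (N i)] [∀ i, Nonempty (N i)] {φ : L.Formula ((α ⊕ β) ⊕ γ)}
    {c : ∀ i, γ → N i} {a : ∀ i, α → N i} {b : ∀ i, β → N i} :
    paramRel φ (ultraproductTuple U c) (ultraproductTuple U a) (ultraproductTuple U b) ↔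
      ∀ᶠ i in U, paramRel φ (c i) (a i) (b i) := by
  have htuple : Sum.elim (Sum.elim (ultraproductTuple U a) (ultraproductTuple U b))
      (ultraproductTuple U c) =
        ultraproductTuple U fun i => Sum.elim (Sum.elim (a i) (b i)) (c i) := by
    ext ((_ | _) | _) <;> rfl
  rw [paramRel, htuple]
  exact Ultraproduct.realize_formula_cast φ fun q i => Sum.elim (Sum.elim (a i) (b i)) (c i) q

section Pattern

variable {κ : Type*} [DecidableEq κ]

/-- The change of variables replacing the block `ȳ` of `φ(x̄, w̄; ȳ; z̄)` by the `m'`-th member of a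
family of blocks that are all parameters, except that the `m`-th one is an object variable. -/
def blockVar (m m' : κ) : ((α ⊕ δ) ⊕ β) ⊕ γ → ((α ⊕ β) ⊕ (κ × β ⊕ γ)) ⊕ δ
  | .inl (.inl (.inl x)) => .inl (.inl (.inl x))
  | .inl (.inl (.inr w)) => .inr w
  | .inl (.inr y) => .inl (if m' = m then .inl (.inr y) else .inr (.inl (m', y)))
  | .inr z => .inl (.inr (.inr z))

theorem elim_comp_blockVar (m m' : κ) (a : α → M) (b : β → M) (d : κ → β → M) (c : γ → M)
    (w : δ → M) :
    Sum.elim (Sum.elim (Sum.elim a b) (Sum.elim (Function.uncurry d) c)) w ∘ blockVar m m' =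
      Sum.elim (Sum.elim (Sum.elim a w) (Function.update d m b m')) c := by
  ext (((_ | _) | _) | _)
  case inl.inr y =>
    by_cases hm : m' = m
    · subst hm
      simp [blockVar]
    · simp [blockVar, hm]
  all_goals rfl

variable [Finite κ] [Finite δ]

open Classical in
/-- The formula saying that some `w̄` satisfies `φ(x̄, w̄; ȳₛ; z̄)` exactly for the `s` in `S`.
The block `ȳₘ` is an object variable, the other blocks are parameters. -/
noncomputable def patternFormula (φ : L.Formula (((α ⊕ δ) ⊕ β) ⊕ γ)) (S : Set κ) (m : κ) :
    L.Formula ((α ⊕ β) ⊕ (κ × β ⊕ γ)) :=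
  Formula.iExs δ <| Formula.iInf fun m' =>
    if m' ∈ S then φ.relabel (blockVar m m') else (φ.relabel (blockVar m m')).not

theorem paramRel_patternFormula {φ : L.Formula (((α ⊕ δ) ⊕ β) ⊕ γ)} {S : Set κ} {m : κ}
    {a : α → M} {b : β → M} {d : κ → β → M} {c : γ → M} :
    paramRel (patternFormula φ S m) (Sum.elim (Function.uncurry d) c) a b ↔
      ∃ w : δ → M, ∀ m', paramRel φ c (Sum.elim a w) (Function.update d m b m') ↔ m' ∈ S := by
  rw [paramRel, patternFormula, Formula.realize_iExs]
  refine exists_congr fun w => ?_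
  rw [Formula.realize_iInf]
  refine forall_congr' fun m' => ?_
  split_ifs with hm <;>
    simp only [Formula.realize_not, Formula.realize_relabel, elim_comp_blockVar, paramRel, hm,
      iff_true, iff_false]

end Pattern

end Formula

section Unstable

variable {L : FirstOrder.Language.{u, v}} {T : L.Theory} {α β γ δ : Type*}

/-- In models of `T`, the relations defined by `φ(x̄; ȳ; z̄)` for varying parameters contain
arbitrarily long finite ladders. -/
def HasLongLadders (T : L.Theory) (φ : L.Formula ((α ⊕ β) ⊕ γ)) : Prop :=
  ∀ n, ∃ (M : FirstOrder.Language.Theory.ModelType.{u, v, max u v} T) (c : γ → M),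
    HasLadder n (paramRel φ c)

/-- Some formula `φ(x̄; ȳ; z̄)`, with object variables `x̄` and `ȳ` indexed by `α` and `β` and
finitely many parameter variables `z̄`, has the order property modulo `T`, expressed through
finite ladders. -/
def IsUnstableIn (T : L.Theory) (α β : Type*) : Prop :=
  ∃ (k : ℕ) (φ : L.Formula ((α ⊕ β) ⊕ Fin k)), HasLongLadders T φ

namespace HasLongLadders

theorem relabel {α' β' γ' : Type*} {φ : L.Formula ((α ⊕ β) ⊕ γ)} (h : HasLongLadders T φ)
    (e : α ≃ α') (f : β ≃ β') (g : γ ≃ γ') :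
    HasLongLadders T (φ.relabel (Sum.map (Sum.map e f) g)) := by
  intro n
  obtain ⟨M, c, hlad⟩ := h n
  refine ⟨M, c ∘ g.symm, .of_comp (· ∘ e.symm) (· ∘ f.symm) ?_⟩
  simpa only [paramRel_relabel_map, Function.comp_assoc, Equiv.symm_comp_self,
    Function.comp_id] using hlad

theorem isUnstableIn [Finite γ] {φ : L.Formula ((α ⊕ β) ⊕ γ)} (h : HasLongLadders T φ) :
    IsUnstableIn T α β := by
  obtain ⟨k, ⟨e⟩⟩ := Finite.exists_equiv_fin γ
  exact ⟨k, _, h.relabel (.refl α) (.refl β) e⟩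

theorem exists_order {φ : L.Formula ((α ⊕ β) ⊕ γ)} (h : HasLongLadders T φ) :
    ∃ (M : FirstOrder.Language.Theory.ModelType.{u, v, max u v} T) (c : γ → M)
      (a : ℕ → α → M) (b : ℕ → β → M), ∀ i j, paramRel φ c (a i) (b j) ↔ i < j := by
  choose M c a b hab using fun n => h (n + 1)
  let U : Ultrafilter ℕ := hyperfilter ℕ
  let P := (U : Filter ℕ).Product fun n => (M n : Type (max u v))
  have : P ⊨ T := ⟨fun σ hσ => (Ultraproduct.sentence_realize σ).2 <|
    .of_forall fun n => Theory.realize_sentence_of_mem T hσ⟩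
  refine ⟨.of T P, ultraproductTuple U c, fun i => ultraproductTuple U fun n => a n (Fin.ofNat _ i),
    fun j => ultraproductTuple U fun n => b n (Fin.ofNat _ j), fun i j => ?_⟩
  have hlarge : ∀ᶠ n in U, max i j ≤ n := Nat.hyperfilter_le_atTop (eventually_ge_atTop _)
  have hlt : ∀ᶠ n in U, paramRel φ (c n) (a n (Fin.ofNat _ i)) (b n (Fin.ofNat _ j)) ↔ i < j := by
    filter_upwards [hlarge] with n hn
    rw [hab, Fin.lt_def, Fin.val_ofNat, Fin.val_ofNat, Nat.mod_eq_of_lt (by omega),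
      Nat.mod_eq_of_lt (by omega)]
  exact paramRel_ultraproductTuple.trans <| (eventually_congr hlt).trans eventually_const

end HasLongLadders

namespace IsUnstableIn

theorem swap (h : IsUnstableIn T α β) : IsUnstableIn T β α := by
  obtain ⟨k, φ, hφ⟩ := h
  refine ⟨k, φ.relabel (Sum.map Sum.swap id), fun n => ?_⟩
  obtain ⟨M, c, hlad⟩ := hφ n
  refine ⟨M, c, ?_⟩
  rw [paramRel_relabel_swap]
  exact hlad.swap

theorem congr_left {α' : Type*} (e : α ≃ α') (h : IsUnstableIn T α β) : IsUnstableIn T α' β := by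
  obtain ⟨k, φ, hφ⟩ := h
  exact ⟨k, _, hφ.relabel e (.refl β) (.refl (Fin k))⟩

theorem nonempty_left (h : IsUnstableIn T α β) : Nonempty α := by
  obtain ⟨k, φ, hφ⟩ := h
  obtain ⟨M, c, a, b, hab⟩ := hφ 2
  by_contra hα
  rw [not_nonempty_iff] at hα
  have h01 : paramRel φ c (a 0) (b 1) := (hab 0 1).2 Fin.zero_lt_one
  rw [Subsingleton.elim (a 0) (a 1)] at h01
  exact lt_irrefl _ ((hab 1 1).1 h01)

end IsUnstableIn

theorem exists_ladder_bound [Finite γ] (h : ¬ IsUnstableIn T α β)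
    (φ : L.Formula ((α ⊕ β) ⊕ γ)) :
    ∃ N, ∀ (M : FirstOrder.Language.Theory.ModelType.{u, v, max u v} T) (c : γ → M),
      ¬ HasLadder N (paramRel φ c) := by
  by_contra! hφ
  exact h (HasLongLadders.isUnstableIn hφ)

theorem exists_hasLadder_fixing_left [Finite β] [Finite γ] [Finite δ]
    (hα : ¬ IsUnstableIn T α β) {M : FirstOrder.Language.Theory.ModelType.{u, v, max u v} T}
    {φ : L.Formula (((α ⊕ δ) ⊕ β) ⊕ γ)} {c : γ → M} {a : ℕ → α → M} {d : ℕ → δ → M}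
    {b : ℕ → β → M} (hab : ∀ i j, paramRel φ c (Sum.elim (a i) (d i)) (b j) ↔ i < j) (n : ℕ) :
    ∃ i, HasLadder n fun w y => paramRel φ c (Sum.elim (a i) w) y := by
  let R (k : Fin n) (i : ℕ) (v : Fin n → ℕ) : Prop :=
    ∃ w : δ → M, ∀ m, paramRel φ c (Sum.elim (a i) w) (b (v m)) ↔ k < m
  have hladder (k m : Fin n) :
      ∃ N, ∀ v, ¬ HasLadder N fun i j => R k i (Function.update v m j) := by
    obtain ⟨N, hN⟩ := exists_ladder_bound hα (patternFormula φ (Set.Ioi k) m)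
    refine ⟨N, fun v hlad => hN M (Sum.elim (Function.uncurry fun m' => b (v m')) c) ?_⟩
    refine .of_comp a b ?_
    simpa only [paramRel_patternFormula, Set.mem_Ioi, R,
      Function.apply_update fun _ => b] using hlad
  have hR (k : Fin n) : ∀ᶠ i in hyperfilter ℕ, ∀ᶠ v in fubiniPow (hyperfilter ℕ) n, R k i v :=
    eventually_fubiniPow_of_cut Nat.hyperfilter_le_atTop (k + 1) (hladder k) <|
      .of_forall fun i v hv => ⟨d i, fun m => by rw [hab, hv]; exact Nat.succ_le_iff⟩
  obtain ⟨i, hi⟩ := (eventually_all.2 hR).exists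
  obtain ⟨v, hv⟩ := (eventually_all.2 hi).exists
  choose w hw using hv
  exact ⟨i, w, b ∘ v, hw⟩

namespace IsUnstableIn

theorem or_of_sum [Finite α] [Finite β] [Finite δ] (h : IsUnstableIn T (α ⊕ δ) β) :
    IsUnstableIn T α β ∨ IsUnstableIn T δ β := by
  refine or_iff_not_imp_left.2 fun hα => ?_
  obtain ⟨k, φ, hφ⟩ := h
  obtain ⟨M, c, a, b, hab⟩ := hφ.exists_order
  suffices HasLongLadders T (φ.relabel leftToParam) from this.isUnstableIn
  intro n
  obtain ⟨i, hi⟩ := exists_hasLadder_fixing_left hα (a := fun i => a i ∘ Sum.inl)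
    (d := fun i => a i ∘ Sum.inr) (by simpa only [Sum.elim_comp_inl_inr] using hab) n
  refine ⟨M, Sum.elim (a i ∘ Sum.inl) c, ?_⟩
  rwa [paramRel_relabel_leftToParam]

theorem single_left [Finite α] [Finite β] (h : IsUnstableIn T α β) :
    IsUnstableIn T (Fin 1) β := by
  obtain ⟨p, ⟨e⟩⟩ := Finite.exists_equiv_fin α
  replace h := h.congr_left e
  clear e
  induction p with
  | zero => exact (not_nonempty_iff.2 inferInstance h.nonempty_left).elim
  | succ p ih => exact (h.congr_left finSumFinEquiv.symm).or_of_sum.elim ih id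

theorem exists_hasOPWithParams (h : IsUnstableIn T α β) :
    ∃ (M : FirstOrder.Language.Theory.ModelType.{u, v, max u v} T) (k : ℕ)
      (φ : L.Formula ((α ⊕ β) ⊕ Fin k)) (c : Fin k → M), HasOPWithParams φ c := by
  obtain ⟨k, φ, hφ⟩ := h
  obtain ⟨M, c, a, b, hab⟩ := hφ.exists_order
  exact ⟨M, k, φ, c, ⟨M, ElementaryEmbedding.refl L M⟩, a, b, hab⟩

end IsUnstableIn

theorem FormulaHasOP.isUnstableIn {φ : L.Formula (α ⊕ β)} (h : FormulaHasOP T φ) :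
    IsUnstableIn T α β := by
  obtain ⟨M, a, b, hab⟩ := h
  refine ⟨0, φ.relabel Sum.inl, fun n => ⟨M, Fin.elim0, fun s => a s, fun t => b t, fun s t => ?_⟩⟩
  rw [paramRel, Formula.realize_relabel, Sum.elim_comp_inl, hab, Fin.lt_def]

theorem FormulaHasIP.formulaHasOP {φ : L.Formula (α ⊕ β)} (h : FormulaHasIP T φ) :
    FormulaHasOP T φ := by
  obtain ⟨M, a, b, hab⟩ := h
  exact ⟨M, a, fun j => b (Set.Iio j), fun i j => hab i (Set.Iio j)⟩

end Unstable

theorem nip_and_stable_of_two_single_variables_no_order_property_general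
    {L : FirstOrder.Language.{u, v}} (T : L.Theory)
    (h : ∀ (M : Type (max u v)) [L.Structure M] [Nonempty M], M ⊨ T →
      ∀ (k : ℕ) (φ : L.Formula ((Fin 1 ⊕ Fin 1) ⊕ Fin k)) (c : Fin k → M),
        ¬ HasOPWithParams φ c) :
    (∀ (m n : ℕ) (φ : L.Formula (Fin m ⊕ Fin n)), ¬ FormulaHasIP T φ) ∧
      (∀ (m n : ℕ) (φ : L.Formula (Fin m ⊕ Fin n)), ¬ FormulaHasOP T φ) := by
  have hstable (m n : ℕ) (φ : L.Formula (Fin m ⊕ Fin n)) : ¬ FormulaHasOP T φ := by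
    intro hφ
    obtain ⟨M, k, ψ, c, hψ⟩ := hφ.isUnstableIn.single_left.swap.single_left.exists_hasOPWithParams
    exact h M M.is_model k ψ c hψ
  exact ⟨fun m n φ hφ => hstable m n φ hφ.formulaHasOP, hstable⟩

/-- If in every model `M` of the complete theory `T` no formula `φ(x; y)` in two
single variables with parameters from `M` has the order property, then `T` is NIP, and
consequently `T` is stable. -/
theorem nip_and_stable_of_two_single_variables_no_order_property
    {L : FirstOrder.Language.{u, v}} (T : L.Theory) (hT : T.IsComplete)
    (h : ∀ (M : Type (max u v)) [L.Structure M] [Nonempty M], M ⊨ T →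
      ∀ (k : ℕ) (φ : L.Formula ((Fin 1 ⊕ Fin 1) ⊕ Fin k)) (c : Fin k → M),
        ¬ HasOPWithParams φ c) :
    (∀ (m n : ℕ) (φ : L.Formula (Fin m ⊕ Fin n)), ¬ FormulaHasIP T φ) ∧
      (∀ (m n : ℕ) (φ : L.Formula (Fin m ⊕ Fin n)), ¬ FormulaHasOP T φ) := by
  exact nip_and_stable_of_two_single_variables_no_order_property_general T h
end
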